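/- arXiv:2003.10408 — 4 statements merged into one kernel-verified Lean document; each statement's English description precedes it below -/
import Mathlib

section
/- Every countable simple graph is majority $3$-colourable: there exists a colouring $\chi$ of the vertices using at most $3$ colours such that for every vertex $v$, the set of neighbours $u$ of $v$ with $\chi(u) = \chi(v)$ has cardinality at most that of the set of neighbours $u$ of $v$ with $\chi(u) \neq \chi(v)$. -/
/-!
Let `F` be the set of vertices of finite degree and `I` the set of those of infinite degree. As the
graph is countable, a vertex of `I` only needs infinitely many neighbours of another colour.

Each `v ∈ I` has infinitely many neighbours in `F`, or else infinitely many neighbours in `I` that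
come after `v` in a fixed enumeration of the vertices. Countably many infinite sets have pairwise
disjoint infinite subsets (`exists_disjoint_selection`), so each `v ∈ I` can be given an infinite
private set of such neighbours. Those in `I` come after `v`, so `I` can be coloured recursively
along the enumeration so that every one of them differs from `v` (`exists_recursive_colouring`).
Each vertex of `F` is forbidden the colour of its owner, if it has one, and so keeps a list of at
least two of the three colours.

It remains to colour `F` from these lists so that its vertices satisfy the majority condition.
For finitely many of them, a list colouring that minimises the number of monochromatic edges
meeting them works (`exists_majority_on_finset`): moving `v` to another colour of its list
cannot reduce the number of monochromatic edges at `v`. Rado's selection principle passes to all of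
`F` (`exists_majority_of_finite_degree`), since the condition at a vertex of finite degree involves
only finitely many vertices.
-/

/-- Countably many infinite sets have pairwise disjoint infinite subsets: `f u` is the index of the
subset that contains `u`, or `none` if there is no such subset. -/
lemma exists_disjoint_selection {V ι : Type*} [Countable ι] (S : ι → Set V)
    (hS : ∀ i, (S i).Infinite) :
    ∃ f : V → Option ι, ∀ i, {u | u ∈ S i ∧ f u = some i}.Infinite := by
  classical
  rcases isEmpty_or_nonempty ι with hι | hι
  · exact ⟨fun _ => none, fun i => isEmptyElim i⟩
  obtain ⟨p, hp⟩ := exists_surjective_nat ι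
  -- Each index `i = p k` is visited at all the times `Nat.pair k m`.
  let π : ℕ → ι := fun n => p n.unpair.1
  -- Hall's condition holds for `n + 1` chosen elements of the set visited at time `n`.
  choose t ht htc using fun n : ℕ => (hS (π n)).exists_subset_card_eq (n + 1)
  obtain ⟨h, hinj, hmem⟩ := (Finset.all_card_le_biUnion_card_iff_exists_injective t).1 (by
    intro s
    rcases s.eq_empty_or_nonempty with rfl | hs
    · simp
    have h1 : s.card ≤ s.max' hs + 1 := by
      have := Finset.card_le_card (show s ⊆ Finset.range (s.max' hs + 1) from fun x hx =>
        Finset.mem_range.2 (Nat.lt_succ_of_le (s.le_max' x hx)))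
      simpa using this
    calc s.card ≤ (t (s.max' hs)).card := by rw [htc]; exact h1
      _ ≤ _ := Finset.card_le_card (Finset.subset_biUnion_of_mem t (s.max'_mem hs)))
  refine ⟨Function.extend h (fun n => some (π n)) (fun _ => none), fun i => ?_⟩
  obtain ⟨k, rfl⟩ := hp i
  refine Set.infinite_of_injective_forall_mem (f := fun m : ℕ => h (Nat.pair k m)) ?_ ?_
  · intro a b hab
    have := hinj hab
    exact (Nat.pair_eq_pair.1 this).2
  · intro m
    have hπ : π (Nat.pair k m) = p k := by simp [π]
    refine ⟨?_, ?_⟩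
    · rw [← hπ]
      exact ht _ (hmem _)
    · rw [hinj.extend_apply, hπ]

lemma exists_recursive_colouring {V : Type*} (e : V → ℕ) (f : V → Option V) :
    ∃ c : V → Fin 3, ∀ u v, f u = some v → e v < e u → c u = c v + 1 := by
  classical
  have wf : WellFounded (fun a b : V => e a < e b) := (measure e).wf
  let F : (u : V) → ((v : V) → e v < e u → Fin 3) → Fin 3 := fun u ih =>
    if h : ∃ v, f u = some v ∧ e v < e u then ih h.choose h.choose_spec.2 + 1 else 0
  refine ⟨wf.fix F, fun u v huv hlt => ?_⟩
  have h : ∃ v, f u = some v ∧ e v < e u := ⟨v, huv, hlt⟩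
  have hv : h.choose = v := Option.some.inj (h.choose_spec.1.symm.trans huv)
  rw [wf.fix_eq]
  simp only [F, dif_pos h]
  exact congrArg (fun w => wf.fix F w + 1) hv

/-- The monochromatic edges in a set `E` that contains all edges at `v` are those that avoid `v`
and those that join `v` to a neighbour of its own colour. -/
lemma ncard_monochromatic {V α : Type*} (G : SimpleGraph V) (E : Set (Sym2 V)) (hE : E.Finite)
    (v : V) (hv : G.incidenceSet v ⊆ E) (hEG : E ⊆ G.edgeSet) (χ : V → α) :
    {e | e ∈ E ∧ (e.map χ).IsDiag}.ncard =
      {e | e ∈ E ∧ v ∉ e ∧ (e.map χ).IsDiag}.ncard + {u | G.Adj v u ∧ χ u = χ v}.ncard := by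
  have hinj : Function.Injective (fun u => s(v, u)) := fun a b hab => Sym2.congr_right.1 hab
  rw [← Set.ncard_image_of_injective {u | G.Adj v u ∧ χ u = χ v} hinj,
    ← Set.ncard_union_eq ?_ (hE.subset fun e he => he.1) (hE.subset ?_)]
  · congr 1
    ext e
    simp only [Set.mem_ofPred_eq, Set.mem_union, Set.mem_image]
    constructor
    · rintro ⟨he, hd⟩
      by_cases hve : v ∈ e
      · right
        obtain ⟨u, rfl⟩ := hve
        have hd' : χ v = χ u := by simpa using hd
        exact ⟨u, ⟨hEG he, hd'.symm⟩, rfl⟩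
      · exact Or.inl ⟨he, hve, hd⟩
    · rintro (⟨he, -, hd⟩ | ⟨u, ⟨hu, hc⟩, rfl⟩)
      · exact ⟨he, hd⟩
      · exact ⟨hv ⟨hu, Sym2.mem_mk_left v u⟩, by simpa using hc.symm⟩
  · rw [Set.disjoint_left]
    rintro e ⟨-, hve, -⟩ ⟨u, -, rfl⟩
    exact hve (Sym2.mem_mk_left v u)
  · rintro _ ⟨u, ⟨hu, -⟩, rfl⟩
    exact hv ⟨hu, Sym2.mem_mk_left v u⟩

/-- List colourings from lists `A` that satisfy the majority condition on a finite set `T` of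
finite-degree vertices, each of whose lists has at least two colours. -/
lemma exists_majority_on_finset {V α : Type*} (G : SimpleGraph V) (A : V → Set α)
    (hne : ∀ v, (A v).Nonempty) (T : Finset V)
    (hT : ∀ v ∈ T, (G.neighborSet v).Finite ∧ ∀ x, ∃ y ∈ A v, y ≠ x) :
    ∃ χ : V → α, (∀ v, χ v ∈ A v) ∧
      ∀ v ∈ T, {u | G.Adj v u ∧ χ u = χ v}.ncard ≤ {u | G.Adj v u ∧ χ u ≠ χ v}.ncard := by
  classical
  let E : Set (Sym2 V) := ⋃ v ∈ T, G.incidenceSet v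
  have hE : E.Finite := by
    refine T.finite_toSet.biUnion fun v hv => ?_
    have : Finite (G.neighborSet v) := (hT v hv).1
    exact Set.finite_coe_iff.1 (Finite.of_equiv _ (G.incidenceSetEquivNeighborSet v).symm)
  have hEG : E ⊆ G.edgeSet := Set.iUnion₂_subset fun v _ => G.incidenceSet_subset v
  choose χ₀ hχ₀ using hne
  -- Among all list colourings, take one with the fewest monochromatic edges meeting `T`.
  obtain ⟨χ, hχ, hmin⟩ : ∃ χ : V → α, (∀ v, χ v ∈ A v) ∧ ∀ χ' : V → α, (∀ v, χ' v ∈ A v) →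
      {e | e ∈ E ∧ (e.map χ).IsDiag}.ncard ≤ {e | e ∈ E ∧ (e.map χ').IsDiag}.ncard := by
    let m : {χ : V → α // ∀ v, χ v ∈ A v} → ℕ := fun χ => {e | e ∈ E ∧ (e.map χ.1).IsDiag}.ncard
    have : Nonempty {χ : V → α // ∀ v, χ v ∈ A v} := ⟨χ₀, hχ₀⟩
    exact ⟨(Function.argmin m).1, (Function.argmin m).2, fun χ' h =>
      Function.argmin_le m ⟨χ', h⟩⟩
  refine ⟨χ, hχ, fun v hv => ?_⟩
  obtain ⟨hfin, hlist⟩ := hT v hv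
  obtain ⟨y, hy, hyv⟩ := hlist (χ v)
  have hvE : G.incidenceSet v ⊆ E := Set.subset_biUnion_of_mem (u := fun v => G.incidenceSet v) hv
  have hle := hmin (Function.update χ v y) (by
    intro w
    by_cases hw : w = v
    · subst hw; simpa using hy
    · simpa [hw] using hχ w)
  rw [ncard_monochromatic G E hE v hvE hEG, ncard_monochromatic G E hE v hvE hEG] at hle
  have h1 : {e | e ∈ E ∧ v ∉ e ∧ (e.map (Function.update χ v y)).IsDiag} =
      {e | e ∈ E ∧ v ∉ e ∧ (e.map χ).IsDiag} := by
    ext e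
    induction e with
    | h a b =>
      simp only [Set.mem_ofPred_eq]
      refine and_congr_right fun _ => and_congr_right fun hve => ?_
      have ha : a ≠ v := by rintro rfl; exact hve (Sym2.mem_mk_left _ _)
      have hb : b ≠ v := by rintro rfl; exact hve (Sym2.mem_mk_right _ _)
      simp [ha, hb]
  rw [h1, add_le_add_iff_left] at hle
  refine hle.trans (Set.ncard_le_ncard ?_ (hfin.subset fun u hu => hu.1))
  rintro u ⟨hu, hc⟩
  refine ⟨hu, ?_⟩
  rw [Function.update_self, Function.update_of_ne hu.ne'] at hc
  rw [hc]
  exact hyv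

lemma exists_majority_of_finite_degree {V α : Type*} [Finite α] (G : SimpleGraph V)
    (A : V → Set α) (hne : ∀ v, (A v).Nonempty)
    (hA : ∀ v, (G.neighborSet v).Finite → ∀ x, ∃ y ∈ A v, y ≠ x) :
    ∃ χ : V → α, (∀ v, χ v ∈ A v) ∧ ∀ v, (G.neighborSet v).Finite →
      {u | G.Adj v u ∧ χ u = χ v}.ncard ≤ {u | G.Adj v u ∧ χ u ≠ χ v}.ncard := by
  classical
  choose g hgA hg using fun T : Finset V =>
    exists_majority_on_finset G A hne (T.filter fun v => (G.neighborSet v).Finite)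
      (fun v hv => ⟨(Finset.mem_filter.1 hv).2, hA v (Finset.mem_filter.1 hv).2⟩)
  obtain ⟨χ, hχ⟩ := Finset.rado_selection (β := fun _ : V => α) g
  refine ⟨χ, fun v => ?_, fun v hv => ?_⟩
  · obtain ⟨t, -, h⟩ := hχ {v}
    rw [h v (Finset.mem_singleton_self v)]
    exact hgA t v
  · obtain ⟨t, hst, h⟩ := hχ (insert v hv.toFinset)
    have hvt : χ v = g t v := h v (Finset.mem_insert_self _ _)
    have hut : ∀ u, G.Adj v u → χ u = g t u := fun u hu =>
      h u (Finset.mem_insert_of_mem (hv.mem_toFinset.2 hu))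
    have h1 : {u | G.Adj v u ∧ χ u = χ v} = {u | G.Adj v u ∧ g t u = g t v} := by
      ext u
      exact and_congr_right fun hu => by rw [hut u hu, hvt]
    have h2 : {u | G.Adj v u ∧ χ u ≠ χ v} = {u | G.Adj v u ∧ g t u ≠ g t v} := by
      ext u
      exact and_congr_right fun hu => by rw [hut u hu, hvt]
    rw [h1, h2]
    exact hg t v (Finset.mem_filter.2 ⟨hst (Finset.mem_insert_self _ _), hv⟩)

/-- Every countable graph is majority 3-colourable. -/
theorem countable_majority_three_colourable {V : Type*} [Countable V] (G : SimpleGraph V) :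
    ∃ χ : V → Fin 3,
      ∀ v, Cardinal.mk {u | G.Adj v u ∧ χ u = χ v} ≤
        Cardinal.mk {u | G.Adj v u ∧ χ u ≠ χ v} := by
  classical
  obtain ⟨e, he⟩ := exists_injective_nat V
  let F : V → Prop := fun v => (G.neighborSet v).Finite
  -- The neighbours of an infinite-degree vertex that may be reserved for it.
  let S : {v // ¬ F v} → Set V := fun i =>
    if {u | G.Adj i u ∧ F u}.Infinite then {u | G.Adj i u ∧ F u}
    else {u | G.Adj i u ∧ ¬ F u ∧ e i < e u}
  have hS : ∀ i, (S i).Infinite := by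
    intro i
    by_cases h : {u | G.Adj i u ∧ F u}.Infinite
    · simpa only [S, if_pos h] using h
    · simp only [S, if_neg h]
      intro hfin
      have hinit : {u | e u ≤ e i}.Finite := (Set.finite_Iic (e i)).preimage he.injOn
      refine i.2 (((Set.not_infinite.1 h).union (hfin.union hinit)).subset fun u hu => ?_)
      have hu' : G.Adj i u := hu
      by_cases hF : F u
      · exact Or.inl ⟨hu', hF⟩
      · rcases lt_or_ge (e i) (e u) with hlt | hge
        · exact Or.inr (Or.inl ⟨hu', hF, hlt⟩)
        · exact Or.inr (Or.inr hge)
  obtain ⟨f, hf⟩ := exists_disjoint_selection S hS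
  obtain ⟨c, hc⟩ := exists_recursive_colouring e (fun u => (f u).map Subtype.val)
  -- Infinite-degree vertices have their colour fixed; the others avoid the colour of their owner.
  let A : V → Set (Fin 3) := fun v => if F v then {x | ∀ i, f v = some i → x ≠ c i} else {c v}
  have hthree : ∀ a b : Fin 3, ∃ y, y ≠ a ∧ y ≠ b := by decide
  have hA : ∀ v, F v → ∀ x, ∃ y ∈ A v, y ≠ x := by
    intro v hv x
    simp only [A, if_pos hv]
    rcases hfv : f v with _ | i
    · obtain ⟨y, hy, -⟩ := hthree x x
      exact ⟨y, by simp, hy⟩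
    · obtain ⟨y, hy, hy'⟩ := hthree x (c i)
      refine ⟨y, ?_, hy⟩
      rintro j hj
      obtain rfl := Option.some.inj hj
      exact hy'
  have hne : ∀ v, (A v).Nonempty := by
    intro v
    by_cases hv : F v
    · obtain ⟨y, hy, -⟩ := hA v hv 0
      exact ⟨y, hy⟩
    · exact ⟨c v, by simp [A, hv]⟩
  obtain ⟨χ, hχA, hχ⟩ := exists_majority_of_finite_degree G A hne hA
  refine ⟨χ, fun v => ?_⟩
  by_cases hv : F v
  · have h1 : {u | G.Adj v u ∧ χ u = χ v}.Finite := hv.subset fun u hu => hu.1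
    have h2 : {u | G.Adj v u ∧ χ u ≠ χ v}.Finite := hv.subset fun u hu => hu.1
    rw [← Set.cast_ncard h1, ← Set.cast_ncard h2]
    exact_mod_cast hχ v hv
  · have hinf : {u | G.Adj v u ∧ χ u ≠ χ v}.Infinite := by
      have hfix : ∀ w, ¬ F w → χ w = c w := fun w hw => by
        have := hχA w
        simp only [A, if_neg hw] at this
        exact this
      refine (hf ⟨v, hv⟩).mono ?_
      rintro u ⟨huS, hfu⟩
      by_cases h : {u | G.Adj v u ∧ F u}.Infinite
      · simp only [S, if_pos h] at huS
        refine ⟨huS.1, ?_⟩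
        have hu := hχA u
        simp only [A, if_pos huS.2] at hu
        rw [hfix v hv]
        exact hu _ hfu
      · simp only [S, if_neg h] at huS
        refine ⟨huS.1, ?_⟩
        rw [hfix v hv, hfix u huS.2.1, hc u v (by simp [hfu]) huS.2.2]
        have : ∀ a : Fin 3, a + 1 ≠ a := by decide
        exact this _
    have := hinf.to_subtype
    exact Cardinal.mk_le_aleph0.trans (Cardinal.aleph0_le_mk _)
end

section
/- For each natural number $k \geq 2$, every countable acyclic digraph is $(1/k)$-majority $(k+1)$-choosable: for every assignment to each vertex $v$ of a list $L(v)$ of $k+1$ colours, there exists a colouring $\chi$ with $\chi(v) \in L(v)$ for every vertex $v$ that is a $(1/k)$-majority colouring. -/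
/-!
The statement follows from a compactness argument once the infinite out-degree requirement has
been replaced by a local one.

Since there are countably many vertices of infinite out-degree, one can choose pairwise disjoint
infinite sets `A p` of out-neighbours, one for each such vertex `p` (`exists_disjoint_children`).
It suffices that `χ v ≠ χ p` whenever `v ∈ A p`. As the `A p` are disjoint, this forbids at most
one colour at each vertex, which leaves at least `k` colours of the list.

By the Rado selection lemma it is enough to satisfy the requirements inside each finite set `t` of
vertices (`exists_finite_colouring`). Colour the infinite out-degree vertices of `t` first, each
after its in-neighbours, avoiding the colour forbidden by the set `A p` it lies in. Then colour the
finite out-degree vertices of `t`, each after its out-neighbours: of the `k` or more available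
colours, one occurs on at most `d(v) / k` out-neighbours (`exists_good_colour`).
-/

/-- A sequence of infinite sets has an injective sequence of representatives. -/
lemma exists_injective_choice {V : Type*} (N : ℕ → Set V) (hN : ∀ n, (N n).Infinite) :
    ∃ f : ℕ → V, Function.Injective f ∧ ∀ n, f n ∈ N n := by
  classical
  choose g hg hg' using fun n (s : Finset V) => (hN n).exists_notMem_finset s
  -- `S n` is the set of the first `n` representatives.
  let S : ℕ → Finset V := fun n => Nat.rec ∅ (fun m s => insert (g m s) s) n
  have hS : ∀ n, S (n + 1) = insert (g n (S n)) (S n) := fun n => rfl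
  have hmono : Monotone S := monotone_nat_of_le_succ fun n => by
    rw [hS]; exact Finset.subset_insert _ _
  have hne : ∀ m n, m < n → g m (S m) ≠ g n (S n) := fun m n hmn h => by
    apply hg' n (S n)
    rw [← h]
    exact hmono (Nat.succ_le_of_lt hmn) (by rw [Nat.succ_eq_add_one, hS]; simp)
  refine ⟨fun n => g n (S n), fun m n h => ?_, fun n => hg _ _⟩
  rcases lt_trichotomy m n with hlt | heq | hgt
  · exact absurd h (hne _ _ hlt)
  · exact heq
  · exact absurd h.symm (hne _ _ hgt)

/-- The infinite out-neighbourhoods of a countable digraph have pairwise disjoint infinite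
subsets `{v | A p v}`. -/
lemma exists_disjoint_children {V : Type*} [Countable V] (r : V → V → Prop) :
    ∃ A : V → V → Prop, (∀ p v, A p v → r p v ∧ {u | r p u}.Infinite) ∧
      (∀ p q v, A p v → A q v → p = q) ∧
      (∀ p, {u | r p u}.Infinite → {v | A p v}.Infinite) := by
  by_cases hI : Nonempty {p | {u | r p u}.Infinite}
  · obtain ⟨e, he⟩ := exists_surjective_nat ({p | {u | r p u}.Infinite} × ℕ)
    obtain ⟨f, hf, hfN⟩ := exists_injective_choice (fun n => {u | r (e n).1 u})
      (fun n => (e n).1.2)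
    refine ⟨fun p v => ∃ m, ((e m).1 : V) = p ∧ f m = v, ?_, ?_, ?_⟩
    · rintro _ _ ⟨m, rfl, rfl⟩
      exact ⟨hfN m, (e m).1.2⟩
    · rintro _ _ _ ⟨m, rfl, rfl⟩ ⟨m', rfl, h⟩
      rw [hf h]
    · intro p hp
      choose m hm using fun n : ℕ => he (⟨p, hp⟩, n)
      have hinj : Function.Injective fun n => f (m n) := fun a b hab => by
        have := congrArg e (hf hab)
        rw [hm, hm] at this
        exact (Prod.ext_iff.1 this).2
      refine (Set.infinite_range_of_injective hinj).mono ?_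
      rintro _ ⟨n, rfl⟩
      exact ⟨m n, by rw [hm], rfl⟩
  · refine ⟨fun _ _ => False, by simp, by simp, fun p hp => absurd ⟨⟨p, hp⟩⟩ hI⟩

/-- A nonempty finite set of vertices of an acyclic digraph contains a vertex with no in-neighbour
in the set. -/
lemma exists_source {V : Type*} (Q : V → V → Prop) (hQ : ∀ v, ¬ Relation.TransGen Q v v)
    (t : Finset V) (ht : t.Nonempty) : ∃ v ∈ t, ∀ u ∈ t, ¬ Q u v := by
  have : IsTrans t fun a b => Relation.TransGen Q a b := ⟨fun _ _ _ => Relation.TransGen.trans⟩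
  have : Std.Irrefl fun a b : t => Relation.TransGen Q a b := ⟨fun a => hQ a⟩
  have hwf := Finite.wellFounded_of_trans_of_irrefl fun a b : t => Relation.TransGen Q a b
  obtain ⟨v, -, hv⟩ := hwf.has_min Set.univ ⟨⟨_, ht.choose_spec⟩, trivial⟩
  exact ⟨v, v.2, fun u hu h => hv ⟨u, hu⟩ trivial (.single h)⟩

/-- Greedy colouring of a finite set `t` along an acyclic relation `Q`, where `Q v w` means that
`w` is coloured before `v`. The predicate `good v c g` says that `c` is acceptable at `v` given
the colouring `g`; it may depend on the colour of a vertex `w ∈ t` only if `Q v w`. -/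
lemma exists_greedy {V C : Type*} (Q : V → V → Prop) (hQ : ∀ v, ¬ Relation.TransGen Q v v)
    (good : V → C → (V → C) → Prop) (hgood : ∀ v g, ∃ c, good v c g) (t : Finset V)
    (hloc : ∀ v ∈ t, ∀ w ∈ t, ¬ Q v w → ∀ c g g', (∀ u, u ≠ w → g u = g' u) →
      good v c g → good v c g')
    (g₀ : V → C) :
    ∃ g : V → C, (∀ v, v ∉ t → g v = g₀ v) ∧ ∀ v ∈ t, good v (g v) g := by
  classical
  induction t using Finset.strongInduction with
  | H t ih =>
    rcases t.eq_empty_or_nonempty with rfl | ht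
    · exact ⟨g₀, by simp, by simp⟩
    obtain ⟨w, hw, hsrc⟩ := exists_source Q hQ t ht
    obtain ⟨g, hg₀, hg⟩ := ih (t.erase w) (Finset.erase_ssubset hw) fun v hv u hu =>
      hloc v (Finset.mem_of_mem_erase hv) u (Finset.mem_of_mem_erase hu)
    obtain ⟨c, hc⟩ := hgood w g
    have hup : ∀ u, u ≠ w → g u = Function.update g w c u := fun u hu => by
      rw [Function.update_of_ne hu]
    refine ⟨Function.update g w c, fun v hv => ?_, fun v hv => ?_⟩
    · have hvw : v ≠ w := fun h => hv (h ▸ hw)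
      rw [← hup v hvw]
      exact hg₀ v fun h => hv (Finset.mem_of_mem_erase h)
    · rcases eq_or_ne v w with rfl | hvw
      · rw [Function.update_self]
        exact hloc v hv v hv (hsrc v hv) c g _ hup hc
      · rw [← hup v hvw]
        exact hloc v hv w hw (hsrc v hv) _ g _ hup (hg v (Finset.mem_erase.2 ⟨hvw, hv⟩))

/-- Colour `c` is acceptable at `v` given the colouring `g`: it is in the list of `v`, differs from
the colour of any `p` with `A p v`, and occurs on at most a `1/k` proportion of the out-neighbours
of `v` if there are finitely many. -/
def GoodColour {V C : Type*} (r A : V → V → Prop) (k : ℕ) (L : V → Finset C)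
    (v : V) (c : C) (g : V → C) : Prop :=
  c ∈ L v ∧ (∀ p, A p v → c ≠ g p) ∧
    ({u | r v u}.Finite → k * {u | r v u ∧ g u = c}.ncard ≤ {u | r v u}.ncard)

/-- One colour of the list is lost to the unique `p` with `A p v`, and averaging over the other
`k` colours gives one that is rare among the out-neighbours. -/
lemma exists_good_colour {V C : Type*} (r A : V → V → Prop)
    (hA : ∀ p q v, A p v → A q v → p = q) (k : ℕ) (hk : 2 ≤ k) (L : V → Finset C)
    (hL : ∀ v, (L v).card = k + 1) (v : V) (g : V → C) :
    ∃ c, GoodColour r A k L v c g := by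
  classical
  obtain ⟨S, hSL, hSk, hSA⟩ : ∃ S : Finset C, S ⊆ L v ∧ k ≤ S.card ∧
      ∀ c ∈ S, ∀ p, A p v → c ≠ g p := by
    by_cases h : ∃ p, A p v
    · obtain ⟨p, hp⟩ := h
      refine ⟨(L v).erase (g p), Finset.erase_subset _ _, ?_, fun c hc q hq => ?_⟩
      · have := Finset.pred_card_le_card_erase (s := L v) (a := g p)
        rw [hL] at this
        simpa using this
      · rw [← hA p q v hp hq]
        exact Finset.ne_of_mem_erase hc
    · exact ⟨L v, subset_rfl, by rw [hL]; omega, fun c _ p hp => absurd ⟨p, hp⟩ h⟩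
  by_cases hfin : {u | r v u}.Finite
  · by_contra! hcon
    set N := hfin.toFinset with hN
    have hbig : ∀ c ∈ S, N.card < k * (N.filter fun u => g u = c).card := by
      intro c hc
      by_contra! hle
      refine hcon c ⟨hSL hc, hSA c hc, fun _ => ?_⟩
      have h1 : {u | r v u ∧ g u = c} = ↑(N.filter fun u => g u = c) := by ext; simp [hN]
      have h2 : {u | r v u} = ↑N := by simp [hN]
      rw [h1, h2, Set.ncard_coe_finset, Set.ncard_coe_finset]
      exact hle
    have hlow : S.card * (N.card + 1) ≤ ∑ c ∈ S, k * (N.filter fun u => g u = c).card := by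
      simpa using Finset.card_nsmul_le_sum S _ (N.card + 1) hbig
    have hup : ∑ c ∈ S, (N.filter fun u => g u = c).card ≤ N.card := by
      rw [← Finset.card_biUnion]
      · exact Finset.card_le_card (Finset.biUnion_subset.2 fun c _ => Finset.filter_subset _ _)
      · intro a _ b _ hab
        exact Finset.disjoint_filter.2 fun u _ h1 h2 => hab (h1.symm.trans h2)
    rw [← Finset.mul_sum] at hlow
    nlinarith [Nat.mul_le_mul_left k hup, Nat.mul_le_mul_right (N.card + 1) hSk]
  · obtain ⟨c, hc⟩ := Finset.card_pos.1 (show 0 < S.card by omega)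
    exact ⟨c, hSL hc, hSA c hc, fun h => absurd h hfin⟩

/-- Every finite set of vertices can be coloured so that all its vertices have acceptable
colours. -/
lemma exists_finite_colouring {V C : Type*} (r A : V → V → Prop)
    (hr : ∀ v, ¬ Relation.TransGen r v v)
    (hAr : ∀ p v, A p v → r p v ∧ {u | r p u}.Infinite)
    (hA : ∀ p q v, A p v → A q v → p = q) (k : ℕ) (hk : 2 ≤ k) (L : V → Finset C)
    (hL : ∀ v, (L v).card = k + 1) (t : Finset V) :
    ∃ g : V → C, ∀ v ∈ t, GoodColour r A k L v (g v) g := by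
  classical
  have hgood := exists_good_colour r A hA k hk L hL
  have hne : ∀ v, (L v).Nonempty := fun v => Finset.card_pos.1 (by rw [hL]; omega)
  obtain ⟨g₁, -, hg₁⟩ := exists_greedy (fun v u => r u v)
    (fun v h => hr v (Relation.transGen_swap.1 h))
    (GoodColour r A k L) hgood (t.filter fun v => {u | r v u}.Infinite)
    (by
      rintro v hv w - hvw c g g' hgg ⟨h1, h2, -⟩
      refine ⟨h1, fun p hp => ?_, fun h => absurd h (Finset.mem_filter.1 hv).2⟩
      rw [← hgg p fun h => hvw (h ▸ (hAr p v hp).1)]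
      exact h2 p hp)
    (fun v => (hne v).choose)
  obtain ⟨g₂, hg₂₁, hg₂⟩ := exists_greedy r hr
    (GoodColour r A k L) hgood (t.filter fun v => {u | r v u}.Finite)
    (by
      rintro v - w hw hvw c g g' hgg ⟨h1, h2, h3⟩
      refine ⟨h1, fun p hp => ?_, fun h => ?_⟩
      · rw [← hgg p fun h => (hAr p v hp).2 (h ▸ (Finset.mem_filter.1 hw).2)]
        exact h2 p hp
      · have : {u | r v u ∧ g' u = c} = {u | r v u ∧ g u = c} := by
          ext u
          refine and_congr_right fun hu => ?_
          rw [hgg u fun h => hvw (h ▸ hu)]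
        rw [this]
        exact h3 h)
    g₁
  refine ⟨g₂, fun v hv => ?_⟩
  by_cases hfin : {u | r v u}.Finite
  · exact hg₂ v (Finset.mem_filter.2 ⟨hv, hfin⟩)
  · -- The second phase leaves the colours of infinite out-degree vertices unchanged.
    have hinf : ∀ p, {u | r p u}.Infinite → g₂ p = g₁ p := fun p hp =>
      hg₂₁ p fun h => hp (Finset.mem_filter.1 h).2
    obtain ⟨h1, h2, -⟩ := hg₁ v (Finset.mem_filter.2 ⟨hv, hfin⟩)
    rw [← hinf v hfin] at h1 h2
    refine ⟨h1, fun p hp => ?_, fun h => absurd h hfin⟩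
    rw [hinf p (hAr p v hp).2]
    exact h2 p hp

/-- Theorem 4.1 (digraph case): for `k ≥ 2`, every countable acyclic digraph is
`(1/k)`-majority `(k+1)`-choosable. -/
theorem countable_acyclic_digraph_frac_majority_choosable {V C : Type*} [Countable V]
    (r : V → V → Prop) (hacyclic : Irreflexive (Relation.TransGen r))
    (k : ℕ) (hk : 2 ≤ k) (L : V → Finset C) (hL : ∀ v, (L v).card = k + 1) :
    ∃ χ : V → C, (∀ v, χ v ∈ L v) ∧
      (∀ v, {u | r v u}.Finite →
        k * {u | r v u ∧ χ u = χ v}.ncard ≤ {u | r v u}.ncard) ∧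
      (∀ v, {u | r v u}.Infinite → {u | r v u ∧ χ u ≠ χ v}.Infinite) := by
  classical
  obtain ⟨A, hAr, hA, hAinf⟩ := exists_disjoint_children r
  choose g hg using exists_finite_colouring r A hacyclic hAr hA k hk L hL
  obtain ⟨χ, hχ⟩ := Finset.rado_selection_subtype (β := fun v => L v)
    fun t (v : t) => ⟨g t v, (hg t v v.2).1⟩
  -- On any finite set, `χ` agrees with a colouring that is acceptable on a larger finite set.
  have key : ∀ s : Finset V, ∃ t, s ⊆ t ∧ ∀ v ∈ s, (χ v : C) = g t v := fun s => by
    obtain ⟨t, hst, h⟩ := hχ s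
    exact ⟨t, hst, fun v hv => congrArg Subtype.val (h ⟨v, hv⟩)⟩
  refine ⟨fun v => χ v, fun v => (χ v).2, fun v hv => ?_, fun v hv => ?_⟩
  · obtain ⟨t, hst, h⟩ := key (insert v hv.toFinset)
    have hvs : v ∈ insert v hv.toFinset := Finset.mem_insert_self _ _
    have heq : {u | r v u ∧ (χ u : C) = χ v} = {u | r v u ∧ g t u = g t v} := by
      ext u
      refine and_congr_right fun hu => ?_
      rw [h v hvs, h u (Finset.mem_insert_of_mem (hv.mem_toFinset.2 hu))]
    rw [heq]
    exact (hg t v (hst hvs)).2.2 hv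
  · refine (hAinf v hv).mono fun u hu => ⟨(hAr v u hu).1, ?_⟩
    obtain ⟨t, hst, h⟩ := key {v, u}
    change (χ u : C) ≠ χ v
    rw [h v (by simp), h u (by simp)]
    exact (hg t u (hst (by simp))).2.1 v hu
end

section
/- For each natural number $k \geq 2$, every finite simple graph is $(1/k)$-majority $k$-choosable: for every assignment to each vertex $v$ of a list $L(v)$ of $k$ colours, there exists a colouring $\chi$ with $\chi(v) \in L(v)$ for every vertex $v$ such that every vertex $v$ has at most $\deg(v)/k$ neighbours $u$ with $\chi(u) = \chi(v)$. -/
/-!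
Take a list colouring `χ` minimising the number of ordered monochromatic adjacent pairs. Recolouring
a single vertex `v` with `c ∈ L v` changes this number by twice the difference between the numbers
of neighbours of `v` coloured `c` and coloured `χ v` (`monoPairs_eq`), so by minimality `χ v` is a
least frequent colour of `L v` among the neighbours of `v`. The `k` colour classes of `L v` are
disjoint inside the neighbourhood of `v`, so the smallest has size at most `deg v / k`.
-/

/-- The number of ordered pairs of adjacent vertices which receive the same colour. -/
def monoPairs {V C : Type*} [Fintype V] (G : SimpleGraph V) [DecidableRel G.Adj] [DecidableEq C]
    (χ : V → C) : ℕ :=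
  ∑ x, ∑ y, if G.Adj x y ∧ χ x = χ y then 1 else 0

/-- Isolates the contribution of the vertex `v`: the first summand does not involve `χ v`. -/
lemma monoPairs_eq {V C : Type*} [Fintype V] [DecidableEq V] (G : SimpleGraph V)
    [DecidableRel G.Adj] [DecidableEq C] (χ : V → C) (v : V) :
    monoPairs G χ =
      (∑ x ∈ Finset.univ.erase v, ∑ y ∈ Finset.univ.erase v,
        if G.Adj x y ∧ χ x = χ y then 1 else 0) +
      2 * ((G.neighborFinset v).filter (fun u => χ u = χ v)).card := by
  have h1 : ((G.neighborFinset v).filter (fun u => χ u = χ v)).card =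
      ∑ y, if G.Adj v y ∧ χ v = χ y then 1 else 0 := by
    rw [Finset.card_eq_sum_ones, Finset.sum_ite, Finset.sum_const_zero, add_zero]
    congr 1
    ext u
    simp [eq_comm]
  have h2 : ∑ x ∈ Finset.univ.erase v, (if G.Adj x v ∧ χ x = χ v then 1 else 0) =
      ((G.neighborFinset v).filter (fun u => χ u = χ v)).card := by
    rw [h1, ← Finset.add_sum_erase _ _ (Finset.mem_univ v)]
    simp [G.adj_comm v, eq_comm (a := χ v)]
  unfold monoPairs
  rw [← Finset.add_sum_erase _ _ (Finset.mem_univ v), ← h1]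
  have h3 : ∀ x, (∑ y, if G.Adj x y ∧ χ x = χ y then 1 else 0) =
      (if G.Adj x v ∧ χ x = χ v then 1 else 0) +
        ∑ y ∈ Finset.univ.erase v, if G.Adj x y ∧ χ x = χ y then 1 else 0 :=
    fun x => (Finset.add_sum_erase _ _ (Finset.mem_univ v)).symm
  simp only [h3]
  rw [Finset.sum_add_distrib, h2]
  ring

/-- For `k ≥ 2`, every finite simple graph is `(1/k)`-majority `k`-choosable. -/
theorem finite_frac_majority_choosable {V C : Type*} [Fintype V] (G : SimpleGraph V)
    [DecidableRel G.Adj] [DecidableEq C] (k : ℕ) (hk : 2 ≤ k)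
    (L : V → Finset C) (hL : ∀ v, (L v).card = k) :
    ∃ χ : V → C, (∀ v, χ v ∈ L v) ∧
      ∀ v, k * ((G.neighborFinset v).filter (fun u => χ u = χ v)).card ≤ G.degree v := by
  classical
  have hne : (Fintype.piFinset L).Nonempty := by
    rw [Fintype.piFinset_nonempty]
    intro v
    rw [← Finset.card_pos, hL v]
    omega
  obtain ⟨χ, hχ, hmin⟩ := Finset.exists_min_image _ (monoPairs G) hne
  rw [Fintype.mem_piFinset] at hχ
  refine ⟨χ, hχ, fun v => ?_⟩
  have key : ∀ c ∈ L v, ((G.neighborFinset v).filter (fun u => χ u = χ v)).card ≤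
      ((G.neighborFinset v).filter (fun u => χ u = c)).card := by
    intro c hc
    have h := hmin (Function.update χ v c) (by
      rw [Fintype.mem_piFinset]
      intro x
      by_cases hx : x = v
      · subst hx; simpa using hc
      · simpa [hx] using hχ x)
    rw [monoPairs_eq G χ v, monoPairs_eq G _ v] at h
    have e1 : (∑ x ∈ Finset.univ.erase v, ∑ y ∈ Finset.univ.erase v,
        if G.Adj x y ∧ Function.update χ v c x = Function.update χ v c y then 1 else 0) =
        ∑ x ∈ Finset.univ.erase v, ∑ y ∈ Finset.univ.erase v,
        if G.Adj x y ∧ χ x = χ y then 1 else 0 := by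
      refine Finset.sum_congr rfl fun x hx => Finset.sum_congr rfl fun y hy => ?_
      rw [Function.update_of_ne (Finset.ne_of_mem_erase hx),
        Function.update_of_ne (Finset.ne_of_mem_erase hy)]
    have e2 : (G.neighborFinset v).filter
        (fun u => Function.update χ v c u = Function.update χ v c v) =
        (G.neighborFinset v).filter (fun u => χ u = c) := by
      refine Finset.filter_congr fun u hu => ?_
      rw [SimpleGraph.mem_neighborFinset] at hu
      rw [Function.update_self, Function.update_of_ne hu.ne']
    rw [e1, e2] at h
    omega
  calc k * ((G.neighborFinset v).filter (fun u => χ u = χ v)).card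
      = ∑ c ∈ L v, ((G.neighborFinset v).filter (fun u => χ u = χ v)).card := by
        rw [Finset.sum_const, hL v, smul_eq_mul]
    _ ≤ ∑ c ∈ L v, ((G.neighborFinset v).filter (fun u => χ u = c)).card :=
        Finset.sum_le_sum key
    _ = ((G.neighborFinset v).filter (fun u => χ u ∈ L v)).card := by
        rw [Finset.card_eq_sum_card_fiberwise (f := χ) (t := L v)
          (s := (G.neighborFinset v).filter (fun u => χ u ∈ L v))
          (fun u hu => (Finset.mem_filter.mp (Finset.mem_coe.mp hu)).2)]
        refine Finset.sum_congr rfl fun c hc => congrArg Finset.card ?_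
        ext u
        simp only [Finset.mem_filter]
        constructor
        · rintro ⟨h, rfl⟩; exact ⟨⟨h, hc⟩, rfl⟩
        · rintro ⟨⟨h, _⟩, h'⟩; exact ⟨h, h'⟩
    _ ≤ G.degree v := Finset.card_filter_le _ _
end

section
/- For each natural number $k \geq 2$, every countable simple graph is $(1/k)$-majority $(k+1)$-correspondence colourable: for every assignment to each vertex $v$ of a list $L(v)$ of $k+1$ colours and to each edge $uv$ of a set of bad pairs $B_{uv} \subseteq L(u) \times L(v)$ such that each colour of $L(u)$ occurs as the first coordinate of at most one pair of $B_{uv}$ and each colour of $L(v)$ occurs as the second coordinate of at most one pair of $B_{uv}$, there exists a colouring $\chi$ with $\chi(v) \in L(v)$ for every vertex $v$ such that every vertex $v$ of finite degree has at most $\deg(v)/k$ neighbours $u$ for which the edge $uv$ is bad, and every vertex $v$ of infinite degree has infinitely many neighbours $u$ for which the edge $uv$ is not bad. -/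
/-!
A vertex of finite degree needs only `k` colours: if the list of each such vertex has at least `k`
colours, a colouring minimising the number of bad edges on a large finite set leaves at most
`deg v / k` bad edges at `v`, since summed over the list of `v` each incident edge is bad for at
most one colour (`exists_local_majority`). So each list has one colour to spare, and it is spent on
behalf of the vertices of infinite degree.

Fix an injection `e : V → ℕ`. A system of distinct representatives (`exists_injective_mem`) yields a
map `f : V → V` such that each `v` of infinite degree has infinitely many neighbours `u` with
`e v < e u` and `f u = v`. Greedily along `e`, pick colours `c` for which no edge from `f u` to `u`
with `e (f u) < e u` is bad. Vertices of infinite degree keep the colour `c`, and any other `u` drops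
from its list the colours in conflict with the colour `c (f u)`, of which there is at most one.
Every vertex of infinite degree is then satisfied by any choice from the remaining lists, and the
requirements at vertices of finite degree, each involving finitely many vertices, are met
simultaneously by Rado's selection lemma.
-/

/-- Course-of-values recursion along a rank function `e` into `ℕ`. -/
theorem exists_rec_of_rank {ι X : Type*} (e : ι → ℕ)
    (F : (i : ι) → ((j : ι) → e j < e i → X) → X) :
    ∃ g : ι → X, ∀ i, g i = F i (fun j _ => g j) :=
  ⟨WellFounded.fix (InvImage.wf e wellFounded_lt) F,
    fun i => WellFounded.fix_eq (InvImage.wf e wellFounded_lt) F i⟩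

/-- Countably many infinite sets have a system of distinct representatives. -/
theorem exists_injective_mem {ι X : Type*} [Countable ι] (A : ι → Set X)
    (hA : ∀ i, (A i).Infinite) :
    ∃ g : ι → X, Function.Injective g ∧ ∀ i, g i ∈ A i := by
  classical
  obtain ⟨e, he⟩ := exists_injective_nat ι
  have hex : ∀ (i : ι) (p : (j : ι) → e j < e i → X),
      ∃ x ∈ A i, ∀ j (h : e j < e i), x ≠ p j h := by
    intro i p
    have hfin : (Set.range fun j : {j // e j < e i} => p j.1 j.2).Finite := by
      have : Finite {j // e j < e i} :=
        ((Set.finite_lt_nat (e i)).preimage he.injOn).to_subtype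
      exact Set.finite_range _
    obtain ⟨x, hx, hx'⟩ := (hA i).exists_notMem_finite hfin
    exact ⟨x, hx, fun j h hxe => hx' ⟨⟨j, h⟩, hxe.symm⟩⟩
  choose F hF hF' using hex
  obtain ⟨g, hg⟩ := exists_rec_of_rank e F
  have hne : ∀ i j, e j < e i → g i ≠ g j := by
    intro i j h
    rw [hg i]
    exact hF' i _ j h
  refine ⟨g, fun i j hij => ?_, fun i => by rw [hg i]; exact hF i _⟩
  rcases lt_trichotomy (e i) (e j) with h | h | h
  · exact absurd hij.symm (hne j i h)
  · exact he h
  · exact absurd hij (hne i j h)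

/-- The sum of a symmetric function vanishing on the diagonal, split at one vertex. -/
theorem sum_split_vertex {V : Type*} [DecidableEq V] (T : Finset V) (v : V) (hv : v ∈ T)
    (m : V → V → ℕ) (hs : ∀ x y, m x y = m y x) (hd : m v v = 0) :
    ∑ x ∈ T, ∑ y ∈ T, m x y
      = ∑ x ∈ T.erase v, ∑ y ∈ T.erase v, m x y + 2 * ∑ x ∈ T, m x v := by
  have h1 : ∀ x, ∑ y ∈ T, m x y = m x v + ∑ y ∈ T.erase v, m x y :=
    fun x => (Finset.add_sum_erase T (fun y => m x y) hv).symm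
  have h2 : ∑ x ∈ T, m x v = ∑ x ∈ T.erase v, m x v := by
    rw [← Finset.add_sum_erase T (fun x => m x v) hv, hd, zero_add]
  rw [← Finset.add_sum_erase T _ hv, h1 v, hd, Finset.sum_congr rfl fun x _ => h1 x,
    Finset.sum_add_distrib, h2, Finset.sum_congr rfl fun y _ => hs v y]
  ring

/-- Some choice `χ` from the lists `L` is such that recolouring a single vertex of `T` within its
list does not decrease the number of conflicts in `T` at that vertex. Conflicts between `x` coloured
`a` and `y` coloured `b` are counted with weight `w x y a b`. -/
theorem exists_local_min {V C : Type*} [DecidableEq V] (T : Finset V) (L : V → Finset C)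
    (hL : ∀ v, (L v).Nonempty) (w : V → V → C → C → ℕ)
    (hs : ∀ x y a b, w x y a b = w y x b a) (hd : ∀ x a b, w x x a b = 0) :
    ∃ χ : V → C, (∀ v, χ v ∈ L v) ∧
      ∀ v ∈ T, ∀ c ∈ L v, ∑ u ∈ T, w u v (χ u) (χ v) ≤ ∑ u ∈ T, w u v (χ u) c := by
  let E : (V → C) → ℕ := fun χ => ∑ x ∈ T, ∑ y ∈ T, w x y (χ x) (χ y)
  choose d hdL using hL
  obtain ⟨χ, hχ, hmin⟩ := (InvImage.wf E wellFounded_lt).has_min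
    {χ : V → C | ∀ v, χ v ∈ L v} ⟨d, hdL⟩
  refine ⟨χ, hχ, fun v hv c hc => ?_⟩
  have hmem : ∀ x, Function.update χ v c x ∈ L x := by
    intro x
    by_cases h : x = v
    · subst h; simpa using hc
    · simpa [h] using hχ x
  have hle : E χ ≤ E (Function.update χ v c) := not_lt.mp (hmin _ hmem)
  simp only [E] at hle
  rw [sum_split_vertex T v hv _ (fun x y => hs x y _ _) (hd _ _ _),
    sum_split_vertex T v hv _ (fun x y => hs x y _ _) (hd _ _ _)] at hle
  have h1 : ∑ x ∈ T.erase v, ∑ y ∈ T.erase v,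
        w x y (Function.update χ v c x) (Function.update χ v c y)
      = ∑ x ∈ T.erase v, ∑ y ∈ T.erase v, w x y (χ x) (χ y) := by
    refine Finset.sum_congr rfl fun x hx => Finset.sum_congr rfl fun y hy => ?_
    rw [Function.update_of_ne (Finset.ne_of_mem_erase hx),
      Function.update_of_ne (Finset.ne_of_mem_erase hy)]
  have h2 : ∑ x ∈ T, w x v (Function.update χ v c x) (Function.update χ v c v)
      = ∑ x ∈ T, w x v (χ x) c := by
    refine Finset.sum_congr rfl fun x _ => ?_
    by_cases h : x = v
    · subst h; rw [hd, hd]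
    · rw [Function.update_of_ne h, Function.update_self]
  rw [h1, h2] at hle
  omega

/-- The majority condition at finitely many vertices of finite degree. Here `bad u v a b` says that
`uv` is an edge which is bad when `u` and `v` are coloured `a` and `b`. -/
theorem exists_local_majority {V C : Type*} (G : SimpleGraph V) (k : ℕ) (L : V → Finset C)
    (hL : ∀ v, (L v).Nonempty) (hLk : ∀ v, (G.neighborSet v).Finite → k ≤ (L v).card)
    (bad : V → V → C → C → Prop) (hadj : ∀ u v a b, bad u v a b → G.Adj u v)
    (hs : ∀ u v a b, bad u v a b → bad v u b a)
    (h1 : ∀ u v a b b', bad u v a b → bad u v a b' → b = b') (S : Finset V) :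
    ∃ χ : V → C, (∀ v, χ v ∈ L v) ∧ ∀ v ∈ S, (G.neighborSet v).Finite →
      k * {u | bad u v (χ u) (χ v)}.ncard ≤ (G.neighborSet v).ncard := by
  classical
  let N : V → Finset V := fun v =>
    if h : (G.neighborSet v).Finite then h.toFinset else ∅
  obtain ⟨χ, hχ, hmin⟩ := exists_local_min (S ∪ S.biUnion N) L hL
    (fun u v a b => if bad u v a b then 1 else 0)
    (fun x y a b => if_congr ⟨hs _ _ _ _, hs _ _ _ _⟩ rfl rfl)
    (fun x a b => if_neg fun h => (hadj _ _ _ _ h).ne rfl)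
  refine ⟨χ, hχ, fun v hv hfin => ?_⟩
  set T := S ∪ S.biUnion N
  have hNT : ∀ u, G.Adj v u → u ∈ T := by
    intro u hu
    refine Finset.mem_union_right _ (Finset.mem_biUnion.2 ⟨v, hv, ?_⟩)
    simpa [N, hfin] using hu
  have hcard : {u | bad u v (χ u) (χ v)}.ncard
      = ∑ u ∈ T, if bad u v (χ u) (χ v) then 1 else 0 := by
    rw [← Finset.card_filter, ← Set.ncard_coe_finset]
    congr 1
    ext u
    simp only [Set.mem_ofPred_eq, Finset.coe_filter]
    exact ⟨fun h => ⟨hNT u (hadj _ _ _ _ h).symm, h⟩, And.right⟩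
  have hdeg : (G.neighborSet v).ncard = ∑ u ∈ T, if G.Adj v u then 1 else 0 := by
    rw [← Finset.card_filter, ← Set.ncard_coe_finset]
    congr 1
    ext u
    simp only [SimpleGraph.mem_neighborSet, Finset.coe_filter, Set.mem_ofPred_eq]
    exact ⟨fun h => ⟨hNT u h, h⟩, And.right⟩
  rw [hcard, hdeg]
  set b := ∑ u ∈ T, if bad u v (χ u) (χ v) then 1 else 0
  calc k * b ≤ (L v).card * b := Nat.mul_le_mul_right _ (hLk v hfin)
    _ = ∑ c ∈ L v, b := by simp
    _ ≤ ∑ c ∈ L v, ∑ u ∈ T, (if bad u v (χ u) c then 1 else 0) :=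
        Finset.sum_le_sum fun c hc => hmin v (Finset.mem_union_left _ hv) c hc
    _ = ∑ u ∈ T, ∑ c ∈ L v, (if bad u v (χ u) c then 1 else 0) := Finset.sum_comm
    _ ≤ ∑ u ∈ T, if G.Adj v u then 1 else 0 := by
        refine Finset.sum_le_sum fun u _ => ?_
        rw [← Finset.card_filter]
        split_ifs with hu
        · refine Finset.card_le_one.2 fun c hc c' hc' => ?_
          exact h1 _ _ _ _ _ (Finset.mem_filter.1 hc).2 (Finset.mem_filter.1 hc').2
        · refine (Finset.card_eq_zero.2 (Finset.filter_eq_empty_iff.2 fun c _ h => ?_)).le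
          exact hu (hadj _ _ _ _ h).symm

/-- By compactness, the majority condition can be met at all vertices of finite degree at once. -/
theorem exists_majority {V C : Type*} (G : SimpleGraph V) (k : ℕ) (L : V → Finset C)
    (hL : ∀ v, (L v).Nonempty) (hLk : ∀ v, (G.neighborSet v).Finite → k ≤ (L v).card)
    (bad : V → V → C → C → Prop) (hadj : ∀ u v a b, bad u v a b → G.Adj u v)
    (hs : ∀ u v a b, bad u v a b → bad v u b a)
    (h1 : ∀ u v a b b', bad u v a b → bad u v a b' → b = b') :
    ∃ χ : V → C, (∀ v, χ v ∈ L v) ∧ ∀ v, (G.neighborSet v).Finite →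
      k * {u | bad u v (χ u) (χ v)}.ncard ≤ (G.neighborSet v).ncard := by
  classical
  choose g hgL hg using exists_local_majority G k L hL hLk bad hadj hs h1
  obtain ⟨χ, hχ⟩ := Finset.rado_selection (β := fun v => {c // c ∈ L v})
    (fun S v => ⟨g S v, hgL S v⟩)
  refine ⟨fun v => χ v, fun v => (χ v).2, fun v hfin => ?_⟩
  obtain ⟨t, hst, ht⟩ := hχ (insert v hfin.toFinset)
  have hval : ∀ x ∈ insert v hfin.toFinset, (χ x : C) = g t x := fun x hx =>
    congrArg Subtype.val (ht x hx)
  have hset : {u | bad u v (χ u) (χ v)} = {u | bad u v (g t u) (g t v)} := by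
    ext u
    by_cases hu : G.Adj v u
    · simp only [Set.mem_ofPred_eq]
      rw [hval u (by simp [hu]), hval v (by simp)]
    · exact ⟨fun h => absurd (hadj _ _ _ _ h).symm hu,
        fun h => absurd (hadj _ _ _ _ h).symm hu⟩
  rw [hset]
  exact hg t v (hst (by simp)) hfin


/-- Theorem 4.5 (graph case): for `k ≥ 2`, every countable graph is `(1/k)`-majority
`(k+1)`-correspondence colourable. -/
theorem countable_frac_majority_correspondence {V C : Type*} [Countable V] (G : SimpleGraph V)
    (k : ℕ) (hk : 2 ≤ k)
    (L : V → Finset C) (hL : ∀ v, (L v).card = k + 1)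
    (B : V → V → Set (C × C))
    (hBsub : ∀ u v, G.Adj u v → ∀ p ∈ B u v, p.1 ∈ L u ∧ p.2 ∈ L v)
    (hBsymm : ∀ u v, G.Adj u v → B v u = Prod.swap '' B u v)
    (hB1 : ∀ u v, G.Adj u v → ∀ p ∈ B u v, ∀ q ∈ B u v, p.1 = q.1 → p = q)
    (hB2 : ∀ u v, G.Adj u v → ∀ p ∈ B u v, ∀ q ∈ B u v, p.2 = q.2 → p = q) :
    ∃ χ : V → C, (∀ v, χ v ∈ L v) ∧
      (∀ v, (G.neighborSet v).Finite →
        k * {u | G.Adj v u ∧ (χ u, χ v) ∈ B u v}.ncard ≤ (G.neighborSet v).ncard) ∧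
      (∀ v, (G.neighborSet v).Infinite →
        {u | G.Adj v u ∧ (χ u, χ v) ∉ B u v}.Infinite) := by
  classical
  obtain ⟨e, he⟩ := exists_injective_nat V
  let bad : V → V → C → C → Prop := fun u v a b => G.Adj u v ∧ (a, b) ∈ B u v
  have hadj : ∀ u v a b, bad u v a b → G.Adj u v := fun u v a b h => h.1
  have hs : ∀ u v a b, bad u v a b → bad v u b a := by
    rintro u v a b ⟨h, hb⟩
    refine ⟨h.symm, ?_⟩
    rw [hBsymm u v h]
    exact ⟨(a, b), hb, rfl⟩
  have h1 : ∀ u v a b b', bad u v a b → bad u v a b' → b = b' :=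
    fun u v a b b' h h' => congrArg Prod.snd (hB1 u v h.1 _ h.2 _ h'.2 rfl)
  -- Each vertex of infinite degree takes charge of infinitely many later neighbours.
  obtain ⟨f, hf⟩ : ∃ f : V → V, ∀ v, (G.neighborSet v).Infinite →
      {u | G.Adj v u ∧ e v < e u ∧ f u = v}.Infinite := by
    obtain ⟨g, hginj, hg⟩ := exists_injective_mem
      (fun i : {v // (G.neighborSet v).Infinite} × ℕ => {u | G.Adj i.1 u ∧ e i.1 < e u}) (by
        rintro ⟨⟨v, hv⟩, n⟩
        refine (hv.sdiff ((Set.finite_le_nat (e v)).preimage he.injOn)).mono ?_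
        rintro u ⟨hu, hu'⟩
        exact ⟨hu, not_le.mp hu'⟩)
    refine ⟨Function.extend g (fun i => i.1.1) id, fun v hv => ?_⟩
    refine Set.infinite_of_injective_forall_mem (f := fun n : ℕ => g (⟨v, hv⟩, n)) ?_ ?_
    · intro m n h
      exact congrArg Prod.snd (hginj h)
    · intro n
      exact ⟨(hg (⟨v, hv⟩, n)).1, (hg (⟨v, hv⟩, n)).2, hginj.extend_apply _ _ _⟩
  have hspare : ∀ u v a, k ≤ ((L v).filter fun b => ¬ bad u v a b).card := by
    intro u v a
    have hle : ((L v).filter fun b => bad u v a b).card ≤ 1 :=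
      Finset.card_le_one.2 fun b hb b' hb' =>
        h1 _ _ _ _ _ (Finset.mem_filter.1 hb).2 (Finset.mem_filter.1 hb').2
    have := Finset.card_filter_add_card_filter_not (s := L v) (fun b => bad u v a b)
    have := hL v
    omega
  have hne : ∀ u v a, ((L v).filter fun b => ¬ bad u v a b).Nonempty := fun u v a =>
    Finset.card_pos.1 (lt_of_lt_of_le (by omega) (hspare u v a))
  obtain ⟨c, hcL, hc⟩ : ∃ c : V → C, (∀ v, c v ∈ L v) ∧
      ∀ u, e (f u) < e u → ¬ bad (f u) u (c (f u)) (c u) := by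
    have hex : ∀ (u : V) (p : (j : V) → e j < e u → C),
        ∃ x ∈ L u, ∀ h : e (f u) < e u, ¬ bad (f u) u (p (f u) h) x := by
      intro u p
      by_cases h : e (f u) < e u
      · obtain ⟨x, hx⟩ := hne (f u) u (p (f u) h)
        exact ⟨x, (Finset.mem_filter.1 hx).1, fun _ => (Finset.mem_filter.1 hx).2⟩
      · obtain ⟨x, hx⟩ : (L u).Nonempty := Finset.card_pos.1 (by rw [hL]; omega)
        exact ⟨x, hx, fun h' => absurd h' h⟩
    choose F hF hF' using hex
    obtain ⟨c, hc⟩ := exists_rec_of_rank e F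
    refine ⟨c, fun v => by rw [hc v]; exact hF v _, fun u h => ?_⟩
    rw [hc u]
    exact hF' u (fun j _ => c j) h
  let L' : V → Finset C := fun v => if (G.neighborSet v).Finite then
    (L v).filter fun b => ¬ bad (f v) v (c (f v)) b else {c v}
  have hfinL' : ∀ v, (G.neighborSet v).Finite →
      L' v = (L v).filter fun b => ¬ bad (f v) v (c (f v)) b := fun v h => if_pos h
  have hinfL' : ∀ v, ¬ (G.neighborSet v).Finite → L' v = {c v} := fun v h => if_neg h
  obtain ⟨χ, hχ, hmaj⟩ := exists_majority G k L' (fun v => by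
      by_cases h : (G.neighborSet v).Finite
      · rw [hfinL' v h]; exact hne _ _ _
      · rw [hinfL' v h]; exact Finset.singleton_nonempty _)
    (fun v h => by rw [hfinL' v h]; exact hspare _ _ _) bad hadj hs h1
  have hχinf : ∀ v, ¬ (G.neighborSet v).Finite → χ v = c v := fun v h => by
    simpa [hinfL' v h] using hχ v
  refine ⟨χ, fun v => ?_, fun v hfin => ?_, fun v hinf => ?_⟩
  · by_cases h : (G.neighborSet v).Finite
    · have := hχ v
      rw [hfinL' v h] at this
      exact (Finset.mem_filter.1 this).1
    · rw [hχinf v h]; exact hcL v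
  · have hset : {u | G.Adj v u ∧ (χ u, χ v) ∈ B u v} = {u | bad u v (χ u) (χ v)} := by
      ext u
      exact and_congr_left' (G.adj_comm v u)
    rw [hset]
    exact hmaj v hfin
  · refine (hf v hinf).mono ?_
    rintro u ⟨hvu, hlt, rfl⟩
    refine ⟨hvu, fun hB => ?_⟩
    have hbad : bad (f u) u (c (f u)) (χ u) := by
      rw [← hχinf (f u) hinf]
      exact hs _ _ _ _ ⟨hvu.symm, hB⟩
    by_cases h : (G.neighborSet u).Finite
    · have := hχ u
      rw [hfinL' u h] at this
      exact (Finset.mem_filter.1 this).2 hbad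
    · rw [hχinf u h] at hbad
      exact hc u hlt hbad
end
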